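/- If a weighted tripartite graph (G,w) with edge densities α, β, γ is extremal and vertex minimal, then each of the three vertex classes A, B, C of G contains at most 3 vertices. -/

import Mathlib

/-!
The proof is a linear-programming argument inside a single class `i`. With the weights of the
other two classes held fixed, the edge densities and the triangle density are affine in the
weights of class `i`. The edge density between the other two classes does not change, so keeping
the total weight of class `i` and all edge densities imposes only three linear conditions on a
perturbation `d` supported on class `i`. With at least four vertices in the class there is a
nonzero such `d` (`exists_direction`), and replacing `d` by `-d` one may assume that the triangle
density does not increase along it. Moving along `d` until some weight vanishes
(`exists_step`) stays in `Tri(α,β,γ)`, and extremality forces the triangle density to stay equal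
to `Tmin`. Deleting the vertex of weight zero (`deleteVertex`) then contradicts vertex minimality.
-/

open Finset

/-- A tripartite graph on `n` vertices: each vertex is assigned one of
three classes, adjacency is symmetric, and edges only join distinct classes. -/
structure TriGraph (n : ℕ) where
  cls : Fin n → Fin 3
  adj : Fin n → Fin n → Bool
  symm : ∀ u v, adj u v = adj v u
  tripart : ∀ u v, adj u v = true → cls u ≠ cls v

/-- The set of vertices in class `i`. -/
def classSet {n : ℕ} (G : TriGraph n) (i : Fin 3) : Finset (Fin n) :=
  Finset.univ.filter (fun v => G.cls v = i)

/-- A weighting of a tripartite graph: weights in `[0,1]` summing to `1`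
on each class. -/
structure Weighting {n : ℕ} (G : TriGraph n) where
  w : Fin n → ℝ
  nonneg : ∀ v, 0 ≤ w v
  le_one : ∀ v, w v ≤ 1
  sum_one : ∀ i : Fin 3, ∑ v ∈ classSet G i, w v = 1

/-- Weighted edge density between classes `i` and `j`. -/
noncomputable def edgeDensity {n : ℕ} (G : TriGraph n) (w : Fin n → ℝ) (i j : Fin 3) : ℝ :=
  ∑ x ∈ classSet G i, ∑ y ∈ classSet G j, if G.adj x y then w x * w y else 0

/-- Weighted triangle density. -/
noncomputable def triDensity {n : ℕ} (G : TriGraph n) (w : Fin n → ℝ) : ℝ :=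
  ∑ a ∈ classSet G 0, ∑ b ∈ classSet G 1, ∑ c ∈ classSet G 2,
    if G.adj a b && G.adj a c && G.adj b c then w a * w b * w c else 0

/-- `(G,W) ∈ Tri(α,β,γ)`: the three edge densities are `α` (between B and C),
`β` (between A and C) and `γ` (between A and B), where A, B, C are classes 0, 1, 2. -/
def InTri {n : ℕ} (G : TriGraph n) (W : Weighting G) (α β γ : ℝ) : Prop :=
  edgeDensity G W.w 1 2 = α ∧ edgeDensity G W.w 0 2 = β ∧ edgeDensity G W.w 0 1 = γ

/-- The minimal triangle density over all weighted tripartite graphs with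
edge densities `α, β, γ`. -/
noncomputable def Tmin (α β γ : ℝ) : ℝ :=
  sInf { t : ℝ | ∃ (n : ℕ) (G : TriGraph n) (W : Weighting G),
    InTri G W α β γ ∧ triDensity G W.w = t }

/-- `(G,W)` is extremal: it lies in `Tri(α,β,γ)` and attains `Tmin`. -/
def Extremal {n : ℕ} (G : TriGraph n) (W : Weighting G) (α β γ : ℝ) : Prop :=
  InTri G W α β γ ∧ triDensity G W.w = Tmin α β γ

/-- `(G,W)` is vertex minimal: no member of `Tri(α,β,γ)` with the same triangle
density has fewer vertices. -/
def VertexMinimal {n : ℕ} (G : TriGraph n) (W : Weighting G) (α β γ : ℝ) : Prop :=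
  InTri G W α β γ ∧
    ¬ ∃ (m : ℕ) (G' : TriGraph m) (W' : Weighting G'),
        m < n ∧ InTri G' W' α β γ ∧ triDensity G' W'.w = triDensity G W.w

/-- Membership in the cube `[0,1]³`. -/
def inCube (α β γ : ℝ) : Prop :=
  α ∈ Set.Icc (0:ℝ) 1 ∧ β ∈ Set.Icc (0:ℝ) 1 ∧ γ ∈ Set.Icc (0:ℝ) 1

/-- The region `R`. -/
def inR (α β γ : ℝ) : Prop :=
  inCube α β γ ∧ 1 < α * β + γ ∧ 1 < α * γ + β ∧ 1 < β * γ + α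

/-- The discriminant `Δ(α,β,γ)`. -/
noncomputable def Delta (α β γ : ℝ) : ℝ :=
  α^2 + β^2 + γ^2 - 2*α*β - 2*α*γ - 2*β*γ + 4*α*β*γ

/-- The region `R₁ = {(α,β,γ) ∈ R : Δ ≥ 0}`. -/
def inR1 (α β γ : ℝ) : Prop := inR α β γ ∧ 0 ≤ Delta α β γ

/-- The region `R₂ = R \ R₁`. -/
def inR2 (α β γ : ℝ) : Prop := inR α β γ ∧ Delta α β γ < 0

/-- Adjacency of a complete tripartite graph minus a given list of (non-)edges. -/
def mkAdj {n : ℕ} (cls : Fin n → Fin 3) (nonEdges : List (ℕ × ℕ)) : Fin n → Fin n → Bool :=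
  fun u v => (cls u != cls v) &&
    !(nonEdges.contains (u.val, v.val) || nonEdges.contains (v.val, u.val))

/-- `H₆`: classes A = {0,1}, B = {2,3}, C = {4,5} (vertices aᵢ, bᵢ, cᵢ in order);
the complete tripartite graph `K_{2,2,2}` minus the edges a₂b₁, b₂c₁, a₁c₂. -/
def H6 : TriGraph 6 where
  cls := ![0,0,1,1,2,2]
  adj := mkAdj ![0,0,1,1,2,2] [(1,2),(3,4),(0,5)]
  symm := by decide
  tripart := by decide

/-- `H₇`: classes A = {0,1}, B = {2,3}, C = {4,5,6};
`K_{2,2,3}` minus the edges a₂b₁, a₁c₂, a₁c₃, b₂c₁, b₂c₂. -/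
def H7 : TriGraph 7 where
  cls := ![0,0,1,1,2,2,2]
  adj := mkAdj ![0,0,1,1,2,2,2] [(1,2),(0,5),(0,6),(3,4),(3,5)]
  symm := by decide
  tripart := by decide

/-- `H₇′`: classes A = {0,1}, B = {2,3,4}, C = {5,6};
`K_{2,3,2}` minus the edges a₂b₁, a₁c₂, b₂c₁, b₂c₂, b₃c₁. -/
def H7' : TriGraph 7 where
  cls := ![0,0,1,1,1,2,2]
  adj := mkAdj ![0,0,1,1,1,2,2] [(1,2),(0,6),(3,5),(3,6),(4,5)]
  symm := by decide
  tripart := by decide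

/-- `H₉`: classes A = {0,1,2}, B = {3,4,5}, C = {6,7,8};
`K_{3,3,3}` minus the 9-cycle a₁c₂, c₂b₂, b₂c₁, c₁b₃, b₃a₂, a₂b₁, b₁a₃, a₃c₃, c₃a₁. -/
def H9 : TriGraph 9 where
  cls := ![0,0,0,1,1,1,2,2,2]
  adj := mkAdj ![0,0,0,1,1,1,2,2,2] [(0,7),(4,7),(4,6),(5,6),(1,5),(1,3),(2,3),(2,8),(0,8)]
  symm := by decide
  tripart := by decide

/-- `F₆`: classes A = {0,1}, B = {2,3}, C = {4,5};
`K_{2,2,2}` minus the edges a₁b₁, a₁c₁, b₁c₁, a₂c₂, b₂c₂. -/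
def F6 : TriGraph 6 where
  cls := ![0,0,1,1,2,2]
  adj := mkAdj ![0,0,1,1,2,2] [(0,2),(0,4),(2,4),(1,5),(3,5)]
  symm := by decide
  tripart := by decide

/-- Strong isomorphism of tripartite graphs: a graph isomorphism mapping
vertex classes onto vertex classes. -/
def StronglyIso {n m : ℕ} (G : TriGraph n) (H : TriGraph m) : Prop :=
  ∃ (e : Fin n ≃ Fin m) (σ : Fin 3 ≃ Fin 3),
    (∀ u v, H.adj (e u) (e v) = G.adj u v) ∧ ∀ v, H.cls (e v) = σ (G.cls v)

/-- A double weighting: a function `p` assigning each edge a value in `(0,1]`. -/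
structure DWeight {n : ℕ} (G : TriGraph n) where
  p : Fin n → Fin n → ℝ
  symm : ∀ u v, p u v = p v u
  pos : ∀ u v, G.adj u v = true → 0 < p u v
  le_one : ∀ u v, G.adj u v = true → p u v ≤ 1

/-- Edge density of a doubly-weighted tripartite graph. -/
noncomputable def dEdgeDensity {n : ℕ} (G : TriGraph n) (w : Fin n → ℝ)
    (p : Fin n → Fin n → ℝ) (i j : Fin 3) : ℝ :=
  ∑ x ∈ classSet G i, ∑ y ∈ classSet G j, if G.adj x y then w x * w y * p x y else 0

/-- Triangle density of a doubly-weighted tripartite graph. -/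
noncomputable def dTriDensity {n : ℕ} (G : TriGraph n) (w : Fin n → ℝ)
    (p : Fin n → Fin n → ℝ) : ℝ :=
  ∑ a ∈ classSet G 0, ∑ b ∈ classSet G 1, ∑ c ∈ classSet G 2,
    if G.adj a b && G.adj a c && G.adj b c then
      w a * w b * w c * p a b * p a c * p b c
    else 0

/-- `C_{ab}`: the vertices of class C (class 2) adjacent to both `a` and `b`. -/
def Cset {n : ℕ} (G : TriGraph n) (a b : Fin n) : Finset (Fin n) :=
  Finset.univ.filter (fun c => G.cls c = 2 ∧ G.adj a c = true ∧ G.adj b c = true)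

/-- Edge density of a simple (unweighted) tripartite graph between classes `i` and `j`. -/
noncomputable def simpleEdgeDensity {n : ℕ} (G : TriGraph n) (i j : Fin 3) : ℝ :=
  (∑ x ∈ classSet G i, ∑ y ∈ classSet G j, if G.adj x y then (1:ℝ) else 0) /
    ((classSet G i).card * (classSet G j).card)

/-- Triangle density of a simple (unweighted) tripartite graph. -/
noncomputable def simpleTriDensity {n : ℕ} (G : TriGraph n) : ℝ :=
  (∑ a ∈ classSet G 0, ∑ b ∈ classSet G 1, ∑ c ∈ classSet G 2,
    if G.adj a b && G.adj a c && G.adj b c then (1:ℝ) else 0) /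
    ((classSet G 0).card * (classSet G 1).card * (classSet G 2).card)

/-! ### Derivatives of the densities -/

/-- The derivative at `w` of the edge density between classes `j` and `k`. -/
noncomputable def edgeDeriv {n : ℕ} (G : TriGraph n) (w : Fin n → ℝ) (j k : Fin 3) :
    (Fin n → ℝ) →ₗ[ℝ] ℝ where
  toFun d := ∑ x ∈ classSet G j, ∑ y ∈ classSet G k,
    if G.adj x y then d x * w y + w x * d y else 0
  map_add' d e := by
    simp only [← sum_add_distrib]
    refine sum_congr rfl fun x _ => sum_congr rfl fun y _ => ?_
    split_ifs
    · simp only [Pi.add_apply]; ring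
    · simp
  map_smul' s d := by
    simp only [smul_eq_mul, mul_sum, RingHom.id_apply, Pi.smul_apply]
    refine sum_congr rfl fun x _ => sum_congr rfl fun y _ => ?_
    split_ifs <;> ring

/-- The derivative at `w` of the triangle density, in direction `d`. -/
noncomputable def triDeriv {n : ℕ} (G : TriGraph n) (w d : Fin n → ℝ) : ℝ :=
  ∑ a ∈ classSet G 0, ∑ b ∈ classSet G 1, ∑ c ∈ classSet G 2,
    if G.adj a b && G.adj a c && G.adj b c then
      d a * w b * w c + w a * d b * w c + w a * w b * d c else 0

lemma triDeriv_neg {n : ℕ} (G : TriGraph n) (w d : Fin n → ℝ) :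
    triDeriv G w (-d) = -triDeriv G w d := by
  simp only [triDeriv, ← sum_neg_distrib]
  refine sum_congr rfl fun a _ => sum_congr rfl fun b _ => sum_congr rfl fun c _ => ?_
  split_ifs
  · simp only [Pi.neg_apply]; ring
  · simp

/-- The total weight of class `i`. -/
noncomputable def classSum {n : ℕ} (G : TriGraph n) (i : Fin 3) : (Fin n → ℝ) →ₗ[ℝ] ℝ where
  toFun d := ∑ x ∈ classSet G i, d x
  map_add' d e := by simp [sum_add_distrib]
  map_smul' s d := by simp [mul_sum]

lemma mul_eq_zero_of_support {n : ℕ} {G : TriGraph n} {i j k : Fin 3} (hjk : j ≠ k)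
    {d : Fin n → ℝ} (hd : ∀ v, G.cls v ≠ i → d v = 0) {x y : Fin n}
    (hx : x ∈ classSet G j) (hy : y ∈ classSet G k) : d x * d y = 0 := by
  simp only [classSet, mem_filter, mem_univ, true_and] at hx hy
  by_cases h : j = i
  · rw [hd y (by rw [hy, ← h]; exact hjk.symm), mul_zero]
  · rw [hd x (by rwa [hx]), zero_mul]

lemma edgeDensity_add {n : ℕ} (G : TriGraph n) (w d : Fin n → ℝ) (s : ℝ) {i j k : Fin 3}
    (hjk : j ≠ k) (hd : ∀ v, G.cls v ≠ i → d v = 0) :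
    edgeDensity G (w + s • d) j k = edgeDensity G w j k + s * edgeDeriv G w j k d := by
  simp only [edgeDensity, edgeDeriv, LinearMap.coe_mk, AddHom.coe_mk, mul_sum,
    ← sum_add_distrib]
  refine sum_congr rfl fun x hx => sum_congr rfl fun y hy => ?_
  have h := mul_eq_zero_of_support hjk hd hx hy
  split_ifs
  · simp only [Pi.add_apply, Pi.smul_apply, smul_eq_mul]
    linear_combination s ^ 2 * h
  · simp

lemma triDensity_add {n : ℕ} (G : TriGraph n) (w d : Fin n → ℝ) (s : ℝ) {i : Fin 3}
    (hd : ∀ v, G.cls v ≠ i → d v = 0) :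
    triDensity G (w + s • d) = triDensity G w + s * triDeriv G w d := by
  simp only [triDensity, triDeriv, mul_sum, ← sum_add_distrib]
  refine sum_congr rfl fun a ha => sum_congr rfl fun b hb => sum_congr rfl fun c hc => ?_
  have h1 := mul_eq_zero_of_support (by decide) hd ha hb
  have h2 := mul_eq_zero_of_support (by decide) hd ha hc
  have h3 := mul_eq_zero_of_support (by decide) hd hb hc
  split_ifs
  · simp only [Pi.add_apply, Pi.smul_apply, smul_eq_mul]
    linear_combination (s ^ 2 * w c + s ^ 3 * d c) * h1 + s ^ 2 * w b * h2 + s ^ 2 * w a * h3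
  · simp

lemma edgeDeriv_eq_zero {n : ℕ} (G : TriGraph n) (w d : Fin n → ℝ) {i j k : Fin 3}
    (hj : j ≠ i) (hk : k ≠ i) (hd : ∀ v, G.cls v ≠ i → d v = 0) : edgeDeriv G w j k d = 0 := by
  simp only [edgeDeriv, LinearMap.coe_mk, AddHom.coe_mk]
  refine sum_eq_zero fun x hx => sum_eq_zero fun y hy => ?_
  simp only [classSet, mem_filter, mem_univ, true_and] at hx hy
  rw [hd x (by rwa [hx]), hd y (by rwa [hy])]
  simp

/-! ### The perturbation -/

/-- A class with more than three vertices carries a nonzero perturbation preserving, to first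
order, the class weight and all edge densities. -/
lemma exists_direction {n : ℕ} (G : TriGraph n) (w : Fin n → ℝ) (i : Fin 3)
    (hcard : 3 < (classSet G i).card) :
    ∃ d : Fin n → ℝ, d ≠ 0 ∧ (∀ v, G.cls v ≠ i → d v = 0) ∧ classSum G i d = 0 ∧
      edgeDeriv G w 1 2 d = 0 ∧ edgeDeriv G w 0 2 d = 0 ∧ edgeDeriv G w 0 1 d = 0 := by
  -- The density between the two classes other than `i` is constant, so its slot in the list of
  -- conditions is taken by the total weight of class `i`, leaving three conditions.
  let F : Fin 3 → (Fin n → ℝ) →ₗ[ℝ] ℝ :=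
    ![edgeDeriv G w 1 2, edgeDeriv G w 0 2, edgeDeriv G w 0 1]
  let Φ : (Fin n → ℝ) →ₗ[ℝ] (Fin 3 → ℝ) :=
    LinearMap.pi (Function.update F i (classSum G i))
  let ext := Function.ExtendByZero.linearMap ℝ (Subtype.val : classSet G i → Fin n)
  have hker : (Φ ∘ₗ ext).ker ≠ ⊥ := LinearMap.ker_ne_bot_of_finrank_lt (by simpa using hcard)
  obtain ⟨c, hc, hc0⟩ := Submodule.exists_mem_ne_zero_of_ne_bot hker
  have hsupp : ∀ v, G.cls v ≠ i → ext c v = 0 := by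
    intro v hv
    refine Function.extend_apply' _ _ _ ?_
    rintro ⟨⟨a, ha⟩, rfl⟩
    exact hv (by simpa [classSet] using ha)
  have hΦ : ∀ k, Function.update F i (classSum G i) k (ext c) = 0 := fun k =>
    congrFun (LinearMap.mem_ker.mp hc) k
  refine ⟨ext c, ?_, hsupp, by simpa using hΦ i, ?_⟩
  · intro h
    apply hc0
    funext a
    have h2 := congrFun h a.1
    rwa [Function.ExtendByZero.linearMap_apply,
      Subtype.val_injective.extend_apply] at h2
  have hF : ∀ k, k ≠ i → F k (ext c) = 0 := fun k hk => by
    have := hΦ k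
    rwa [Function.update_of_ne hk] at this
  refine ⟨?_, ?_, ?_⟩
  · by_cases h : 0 = i
    · exact edgeDeriv_eq_zero G w _ (by rw [← h]; decide) (by rw [← h]; decide) hsupp
    · exact hF 0 h
  · by_cases h : 1 = i
    · exact edgeDeriv_eq_zero G w _ (by rw [← h]; decide) (by rw [← h]; decide) hsupp
    · exact hF 1 h
  · by_cases h : 2 = i
    · exact edgeDeriv_eq_zero G w _ (by rw [← h]; decide) (by rw [← h]; decide) hsupp
    · exact hF 2 h

/-- The ray from a nonnegative vector `w` in a direction with a negative entry leaves the
nonnegative orthant through a point with a zero coordinate. -/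
lemma exists_step {n : ℕ} (w d : Fin n → ℝ) (hw : ∀ v, 0 ≤ w v) (hd : ∃ v, d v < 0) :
    ∃ s : ℝ, 0 ≤ s ∧ (∀ v, 0 ≤ (w + s • d) v) ∧ ∃ v, (w + s • d) v = 0 := by
  obtain ⟨v₁, hv₁⟩ := hd
  obtain ⟨v, hv, hmin⟩ := Finset.exists_min_image (univ.filter fun v => d v < 0)
    (fun v => w v / (-d v)) ⟨v₁, by simpa using hv₁⟩
  simp only [mem_filter, mem_univ, true_and] at hv hmin
  have hs : 0 ≤ w v / (-d v) := div_nonneg (hw v) (by linarith)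
  refine ⟨w v / (-d v), hs, fun u => ?_, v, ?_⟩
  · simp only [Pi.add_apply, Pi.smul_apply, smul_eq_mul]
    rcases lt_or_ge (d u) 0 with hu | hu
    · have := (le_div_iff₀ (by linarith : 0 < -d u)).mp (hmin u hu)
      linarith
    · exact add_nonneg (hw u) (mul_nonneg hs hu)
  · simp only [Pi.add_apply, Pi.smul_apply, smul_eq_mul]
    field_simp [hv.ne]
    ring

/-- The weighting with values `w`; the upper bound `1` follows from the other conditions. -/
def weightingOf {n : ℕ} (G : TriGraph n) (w : Fin n → ℝ) (h0 : ∀ v, 0 ≤ w v)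
    (h1 : ∀ i, ∑ v ∈ classSet G i, w v = 1) : Weighting G where
  w := w
  nonneg := h0
  le_one v := by
    rw [← h1 (G.cls v)]
    exact single_le_sum (fun u _ => h0 u) (by simp [classSet])
  sum_one := h1

lemma triDensity_nonneg {n : ℕ} (G : TriGraph n) (W : Weighting G) : 0 ≤ triDensity G W.w := by
  refine sum_nonneg fun a _ => sum_nonneg fun b _ => sum_nonneg fun c _ => ?_
  have := W.nonneg
  split_ifs
  · exact mul_nonneg (mul_nonneg (this a) (this b)) (this c)
  · exact le_rfl

lemma Tmin_le {n : ℕ} (G : TriGraph n) (W : Weighting G) {α β γ : ℝ} (h : InTri G W α β γ) :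
    Tmin α β γ ≤ triDensity G W.w := by
  refine csInf_le ⟨0, ?_⟩ ⟨n, G, W, h, rfl⟩
  rintro _ ⟨m, G', W', _, rfl⟩
  exact triDensity_nonneg G' W'

/-! ### Deleting a vertex of weight zero -/

/-- The graph with vertex `v` deleted, the remaining vertices being renumbered by
`v.succAbove`. -/
def deleteVertex {m : ℕ} (G : TriGraph (m + 1)) (v : Fin (m + 1)) : TriGraph m where
  cls x := G.cls (v.succAbove x)
  adj x y := G.adj (v.succAbove x) (v.succAbove y)
  symm _ _ := G.symm _ _
  tripart _ _ := G.tripart _ _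

lemma sum_deleteVertex {m : ℕ} (G : TriGraph (m + 1)) (v : Fin (m + 1)) (j : Fin 3)
    (f : Fin (m + 1) → ℝ) (hf : f v = 0) :
    ∑ x ∈ classSet (deleteVertex G v) j, f (v.succAbove x) = ∑ x ∈ classSet G j, f x := by
  simp only [classSet, sum_filter]
  rw [Fin.sum_univ_succAbove _ v]
  simp only [hf, ite_self, zero_add]
  rfl

lemma edgeDensity_deleteVertex {m : ℕ} (G : TriGraph (m + 1)) (v : Fin (m + 1))
    (w : Fin (m + 1) → ℝ) (hv : w v = 0) (j k : Fin 3) :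
    edgeDensity (deleteVertex G v) (fun x => w (v.succAbove x)) j k = edgeDensity G w j k := by
  unfold edgeDensity
  rw [← sum_deleteVertex G v j _ (by simp [hv])]
  refine sum_congr rfl fun x _ => ?_
  rw [← sum_deleteVertex G v k _ (by simp [hv])]
  rfl

lemma triDensity_deleteVertex {m : ℕ} (G : TriGraph (m + 1)) (v : Fin (m + 1))
    (w : Fin (m + 1) → ℝ) (hv : w v = 0) :
    triDensity (deleteVertex G v) (fun x => w (v.succAbove x)) = triDensity G w := by
  unfold triDensity
  rw [← sum_deleteVertex G v 0 _ (by simp [hv])]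
  refine sum_congr rfl fun a _ => ?_
  rw [← sum_deleteVertex G v 1 _ (by simp [hv])]
  refine sum_congr rfl fun b _ => ?_
  rw [← sum_deleteVertex G v 2 _ (by simp [hv])]
  rfl

lemma exists_smaller {n : ℕ} (G : TriGraph n) (W : Weighting G) {α β γ : ℝ}
    (h : InTri G W α β γ) (v : Fin n) (hv : W.w v = 0) :
    ∃ (m : ℕ) (G' : TriGraph m) (W' : Weighting G'),
      m < n ∧ InTri G' W' α β γ ∧ triDensity G' W'.w = triDensity G W.w := by
  obtain _ | m := n
  · exact v.elim0
  refine ⟨m, deleteVertex G v, weightingOf _ (fun x => W.w (v.succAbove x))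
    (fun x => W.nonneg _) (fun j => ?_), m.lt_succ_self, ⟨?_, ?_, ?_⟩, ?_⟩
  · rw [sum_deleteVertex G v j W.w hv, W.sum_one]
  · exact (edgeDensity_deleteVertex G v W.w hv 1 2).trans h.1
  · exact (edgeDensity_deleteVertex G v W.w hv 0 2).trans h.2.1
  · exact (edgeDensity_deleteVertex G v W.w hv 0 1).trans h.2.2
  · exact triDensity_deleteVertex G v W.w hv

/-! ### The bound on the class sizes -/

/-- If (G,w) with edge densities α, β, γ is extremal and vertex
minimal then every vertex class has at most 3 vertices. -/
theorem stmt17 (α β γ : ℝ) {n : ℕ} (G : TriGraph n) (W : Weighting G)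
    (hex : Extremal G W α β γ) (hvm : VertexMinimal G W α β γ) :
    ∀ i : Fin 3, (classSet G i).card ≤ 3 := by
  intro i
  by_contra! hcard
  obtain ⟨d, hd0, hsupp, hsum, h12, h02, h01, hle⟩ : ∃ d : Fin n → ℝ, d ≠ 0 ∧
      (∀ v, G.cls v ≠ i → d v = 0) ∧ classSum G i d = 0 ∧ edgeDeriv G W.w 1 2 d = 0 ∧
      edgeDeriv G W.w 0 2 d = 0 ∧ edgeDeriv G W.w 0 1 d = 0 ∧ triDeriv G W.w d ≤ 0 := by
    obtain ⟨d, hd0, hsupp, hsum, h12, h02, h01⟩ := exists_direction G W.w i hcard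
    rcases le_total (triDeriv G W.w d) 0 with h | h
    · exact ⟨d, hd0, hsupp, hsum, h12, h02, h01, h⟩
    · exact ⟨-d, neg_ne_zero.mpr hd0, fun v hv => by simp [hsupp v hv], by simp [hsum],
        by simp [h12], by simp [h02], by simp [h01], by rw [triDeriv_neg]; linarith⟩
  have hsum' : ∀ j, ∑ v ∈ classSet G j, d v = 0 := by
    intro j
    by_cases hj : j = i
    · subst hj; exact hsum
    · refine sum_eq_zero fun v hv => hsupp v ?_
      simp only [classSet, mem_filter, mem_univ, true_and] at hv
      rwa [hv]
  have hneg : ∃ v, d v < 0 := by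
    by_contra! hnn
    refine hd0 (funext fun v => ?_)
    exact (sum_eq_zero_iff_of_nonneg fun u _ => hnn u).mp (hsum' (G.cls v)) v
      (by simp [classSet])
  obtain ⟨s, hs, hpos, v, hv⟩ := exists_step W.w d W.nonneg hneg
  let W' : Weighting G := weightingOf G (W.w + s • d) hpos fun j => by
    simp [sum_add_distrib, ← mul_sum, hsum' j, W.sum_one j]
  have hin : InTri G W' α β γ := by
    refine ⟨?_, ?_, ?_⟩
    · exact (edgeDensity_add G W.w d s (by decide) hsupp).trans (by rw [h12, hex.1.1]; ring)
    · exact (edgeDensity_add G W.w d s (by decide) hsupp).trans (by rw [h02, hex.1.2.1]; ring)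
    · exact (edgeDensity_add G W.w d s (by decide) hsupp).trans (by rw [h01, hex.1.2.2]; ring)
  have htri : triDensity G W'.w = triDensity G W.w := by
    refine le_antisymm ?_ (hex.2 ▸ Tmin_le G W' hin)
    have h := triDensity_add G W.w d s hsupp
    have h' := mul_nonpos_of_nonneg_of_nonpos hs hle
    change triDensity G (W.w + s • d) ≤ _
    linarith
  obtain ⟨m, G'', W'', hm, hin'', ht⟩ := exists_smaller G W' hin v hv
  exact hvm.2 ⟨m, G'', W'', hm, hin'', ht.trans htri⟩
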